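/- arXiv:cs/0110010 — 2 statements merged into one kernel-verified Lean document; each statement's English description precedes it below -/
import Mathlib

section
/- Let (v₀¹,v₁) and (v₀²,v₂) be initialized pairs of clock valuations with (v₀¹,v₁) ≈ (v₀²,v₂). For any r ⊆ K⁺ and any clock valuation v¹ with v¹↓_r = v₁, there exists a clock valuation v² such that: (2.1) v²↓_r = v₂ and (v₀¹,v¹) ≈ (v₀²,v²); (2.2) v¹ is initial iff v² is initial, v¹ = v₀¹ iff v² = v₀², and for every clock constraint c, v¹ satisfies c iff v² satisfies c. -/
open scoped BigOperators

namespace PTApaper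

/-! ## Clock valuations -/

/-- A (raw) clock valuation on clocks `x_0, …, x_k`. -/
abbrev Val (k : ℕ) := Fin (k+1) → ℝ

/-- A discrete clock valuation. -/
abbrev DVal (k : ℕ) := Fin (k+1) → ℕ

/-- A clock valuation takes nonnegative values. -/
def IsVal {k : ℕ} (v : Val k) : Prop := ∀ i, 0 ≤ v i

/-- A valuation is initial if the auxiliary clock `x_0` has value 0. -/
def Initial {k : ℕ} (v : Val k) : Prop := v 0 = 0

/-- The integral part `int(v)` of a valuation. -/
noncomputable def intPart {k : ℕ} (v : Val k) : DVal k := fun i => (⌊v i⌋).toNat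

/-- The fractional parts of the relative representation `rel(v)`:
`fract(rel(v))(0) = fract (1 - fract (v 0))` and
`fract(rel(v))(i) = fract (fract (v i) + fract(rel(v))(0))` for `i ∈ K⁺`. -/
noncomputable def relFract {k : ℕ} (v : Val k) : Fin (k+1) → ℝ := fun i =>
  if i = 0 then Int.fract (1 - Int.fract (v 0))
  else Int.fract (Int.fract (v i) + Int.fract (1 - Int.fract (v 0)))

/-- Synchronous clock progress `v + δ`. -/
def shift {k : ℕ} (v : Val k) (δ : ℝ) : Val k := fun i => v i + δ

/-- Clock reset `v↓_r`. -/
def resetVal {k : ℕ} (r : Finset (Fin (k+1))) (v : Val k) : Val k :=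
  fun i => if i ∈ r then 0 else v i

/-! ## Patterns -/

/-- A raw pattern: a finite sequence of subsets of `K⁰ ∪ K¹`, where the index
`(i, false)` stands for `i⁰` and `(i, true)` stands for `i¹`. -/
abbrev PatSeq (k : ℕ) := List (Finset (Fin (k+1) × Bool))

/-- The well-formedness conditions making `η = p₀,…,p_n` a pattern:
`0 ≤ n < 2(k+1)`, the `p_m` are nonempty and pairwise disjoint, `0⁰ ∈ p₀`,
and `p₀ ∪ … ∪ p_n = K⁰ ∪ K¹`. -/
def IsPattern {k : ℕ} (η : PatSeq k) : Prop :=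
  η.length ≤ 2*(k+1) ∧
  (∀ p ∈ η, p.Nonempty) ∧
  η.Pairwise Disjoint ∧
  ((0 : Fin (k+1)), false) ∈ η.getD 0 ∅ ∧
  (∀ x : Fin (k+1) × Bool, ∃ p ∈ η, x ∈ p)

/-- `bval v₀ v₁ b` is `v_b`. -/
def bval {k : ℕ} (v₀ v₁ : Val k) : Bool → Val k
  | false => v₀
  | true => v₁

/-- The defining ordering condition for "`(v₀,v₁)` has pattern `η = p₀,…,p_n`":
for all positions `m, m'`, copies `b, b'` and clocks `i, i'` with `i^b ∈ p_m` and
`i'^{b'} ∈ p_{m'}`, `fract(rel(v_b))(i) = fract(rel(v_{b'}))(i')` iff `m = m'`, and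
`fract(rel(v_b))(i) < fract(rel(v_{b'}))(i')` iff `m < m'`. -/
def HasPatternOrd {k : ℕ} (v₀ v₁ : Val k) (η : PatSeq k) : Prop :=
  ∀ m m' : Fin η.length, ∀ b b' : Bool, ∀ i i' : Fin (k+1),
    (i, b) ∈ η.get m → (i', b') ∈ η.get m' →
      ((relFract (bval v₀ v₁ b) i = relFract (bval v₀ v₁ b') i' ↔ m = m') ∧
       (relFract (bval v₀ v₁ b) i < relFract (bval v₀ v₁ b') i' ↔ (m : ℕ) < (m' : ℕ)))

/-- `(v₀,v₁)` has pattern `η` (written `[(v₀,v₁)] = η`). -/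
def PatternOf {k : ℕ} (v₀ v₁ : Val k) (η : PatSeq k) : Prop :=
  IsPattern η ∧ HasPatternOrd v₀ v₁ η

/-- A pattern is initial if it is the pattern of `(v₀,v₀)` for some initial valuation `v₀`. -/
def InitialPattern {k : ℕ} (η : PatSeq k) : Prop :=
  ∃ v₀ : Val k, IsVal v₀ ∧ Initial v₀ ∧ PatternOf v₀ v₀ η

/-- The equivalence `(v₀¹,v₁) ≈ (v₀²,v₂)`: same pattern and same integral parts. -/
def PairEquiv {k : ℕ} (va vb vc vd : Val k) : Prop :=
  (∃ η : PatSeq k, PatternOf va vb η ∧ PatternOf vc vd η) ∧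
  intPart va = intPart vc ∧ intPart vb = intPart vd

/-! ## now-position, Next, next, reset -/

/-- The index of the now-position, i.e. the position containing `0¹`. -/
def nowIdx {k : ℕ} (η : PatSeq k) : ℕ :=
  η.findIdx fun p => decide (((0 : Fin (k+1)), true) ∈ p)

/-- A merge-pattern: the now-position is the singleton `{0¹}`. -/
def IsMergePat {k : ℕ} (η : PatSeq k) : Prop :=
  η.getD (nowIdx η) ∅ = ({((0 : Fin (k+1)), true)} : Finset (Fin (k+1) × Bool))

/-- A split-pattern: a pattern that is not a merge-pattern. -/
def IsSplitPat {k : ℕ} (η : PatSeq k) : Prop := ¬ IsMergePat η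

/-- The next pattern `Next(η)`. -/
def NextPat {k : ℕ} (η : PatSeq k) : PatSeq k :=
  let i := nowIdx η
  if η.getD i ∅ = ({((0 : Fin (k+1)), true)} : Finset (Fin (k+1) × Bool)) then
    -- merge case : `p₀, …, p_{i-1} ∪ {0¹}, p_{i+1}, …, p_n`
    η.take (i-1) ++ [η.getD (i-1) ∅ ∪ {((0 : Fin (k+1)), true)}] ++ η.drop (i+1)
  else if i = 0 then
    -- split case with `i = 0` : `p₀ ∖ {0¹}, p₁, …, p_n, {0¹}`
    (η.getD 0 ∅ \ {((0 : Fin (k+1)), true)}) :: (η.drop 1 ++ [{((0 : Fin (k+1)), true)}])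
  else
    -- split case with `i > 0` : `p₀, …, p_{i-1}, {0¹}, p_i ∖ {0¹}, p_{i+1}, …, p_n`
    η.take i ++ [{((0 : Fin (k+1)), true)}, η.getD i ∅ \ {((0 : Fin (k+1)), true)}]
      ++ η.drop (i+1)

/-- The counter update of `next(η,u)`. -/
def nextD {k : ℕ} (η : PatSeq k) (u : DVal k) : DVal k :=
  let i := nowIdx η
  if η.getD i ∅ = ({((0 : Fin (k+1)), true)} : Finset (Fin (k+1) × Bool)) then
    fun j =>
      if j = 0 then (if i = 1 then u 0 + 1 else u 0)
      else (if (j, true) ∈ η.getD (i-1) ∅ then u j + 1 else u j)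
  else u

/-- `next(η,u)`. -/
def nextPair {k : ℕ} (η : PatSeq k) (u : DVal k) : PatSeq k × DVal k :=
  (NextPat η, nextD η u)

/-- The pattern part of `reset_r(η,u)`: all indices `j¹`, `j ∈ r`, are moved into the
now-position, and entries that become empty are deleted. -/
def ResetPat {k : ℕ} (r : Finset (Fin (k+1))) (η : PatSeq k) : PatSeq k :=
  let r1 : Finset (Fin (k+1) × Bool) := r.image (fun j => (j, true))
  let i := nowIdx η
  (η.mapIdx (fun m p => if m = i then p ∪ r1 else p \ r1)).filter (fun p => decide (p ≠ ∅))

/-- The counter update of `reset_r(η,u)`. -/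
def resetD {k : ℕ} (r : Finset (Fin (k+1))) (u : DVal k) : DVal k :=
  fun j => if j ∈ r then 0 else u j

/-- `reset_r(η,u)`. -/
def resetPair {k : ℕ} (r : Finset (Fin (k+1))) (η : PatSeq k) (u : DVal k) :
    PatSeq k × DVal k :=
  (ResetPat r η, resetD r u)

/-! ## Pattern changes -/

/-- `v` has no pattern change for `δ`. -/
def NoChange {k : ℕ} (v₀ v : Val k) (δ : ℝ) : Prop :=
  ∃ η : PatSeq k, PatternOf v₀ v η ∧
    ∀ δ', 0 ≤ δ' → δ' ≤ δ → PatternOf v₀ (shift v δ') η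

/-- `v` has one pattern change for `δ`. -/
def OneChange {k : ℕ} (v₀ v : Val k) (δ : ℝ) : Prop :=
  ∃ η η' : PatSeq k, PatternOf v₀ v η ∧ PatternOf v₀ (shift v δ) η' ∧
    NextPat η = η' ∧
    ((∀ δ', 0 < δ' → δ' < δ → PatternOf v₀ (shift v δ') η) ∨
     (∀ δ', 0 < δ' → δ' < δ → PatternOf v₀ (shift v δ') η'))

/-- `v` has `n` pattern changes for `δ` (for `n ≥ 1`): `δ = δ₁ + … + δ_n` with each
`δ_j > 0` and `v + δ₁ + … + δ_j` has one pattern change for `δ_{j+1}`. -/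
def NChanges {k : ℕ} (v₀ v : Val k) (n : ℕ) (δ : ℝ) : Prop :=
  ∃ d : ℕ → ℝ, (∀ j < n, 0 < d j) ∧ (∑ j ∈ Finset.range n, d j) = δ ∧
    ∀ j < n, OneChange v₀ (shift v (∑ j' ∈ Finset.range j, d j')) (d j)

/-! ## Clock constraints -/

/-- Comparison operators `<, ≤, =, ≥, >`. -/
inductive CCmp | lt | le | eq | ge | gt

/-- Evaluation of a comparison operator on reals. -/
def CCmp.evalR : CCmp → ℝ → ℝ → Prop
  | .lt, a, b => a < b
  | .le, a, b => a ≤ b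
  | .eq, a, b => a = b
  | .ge, a, b => a ≥ b
  | .gt, a, b => a > b

/-- Clock constraints over the clocks `x_1, …, x_k` (indexed by `Fin k`, clock
`x_{i+1}` for `i : Fin k`): Boolean combinations of `x_i - x_j # d` and `x_i # d`. -/
inductive CC (k : ℕ)
  | diff (i j : Fin k) (op : CCmp) (d : ℕ) : CC k
  | single (i : Fin k) (op : CCmp) (d : ℕ) : CC k
  | not (c : CC k) : CC k
  | and (c₁ c₂ : CC k) : CC k

/-- `v ∈ c` : the valuation `v` satisfies the clock constraint `c`. -/
def CC.sat {k : ℕ} (v : Val k) : CC k → Prop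
  | .diff i j op d => op.evalR (v i.succ - v j.succ) (d : ℝ)
  | .single i op d => op.evalR (v i.succ) (d : ℝ)
  | .not c => ¬ c.sat v
  | .and c₁ c₂ => c₁.sat v ∧ c₂.sat v

/-- The position (in `η`) of an index `x ∈ K⁰ ∪ K¹`. -/
def posOf {k : ℕ} (η : PatSeq k) (x : Fin (k+1) × Bool) : ℕ :=
  η.findIdx fun p => decide (x ∈ p)

/-- The truth value, given by pattern `η`, of the fractional ordering
`fract(x_a) > fract(x_b)`. -/
def fracGtP {k : ℕ} (η : PatSeq k) (a b : Fin (k+1)) : Prop :=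
  let i := posOf η ((0 : Fin (k+1)), true)
  let m₁ := posOf η (a, true)
  let m₂ := posOf η (b, true)
  (m₁ < i ∧ i ≤ m₂) ∨ (m₂ < m₁ ∧ m₁ < i) ∨ (i ≤ m₂ ∧ m₂ < m₁)

/-- The truth value, given by pattern `η`, of `fract(x_a) = fract(x_b)`. -/
def fracEqP {k : ℕ} (η : PatSeq k) (a b : Fin (k+1)) : Prop :=
  posOf η (a, true) = posOf η (b, true)

/-- The truth value, given by pattern `η`, of `fract(x_a) = 0`. -/
def fracZeroP {k : ℕ} (η : PatSeq k) (a : Fin (k+1)) : Prop :=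
  posOf η (a, true) = posOf η ((0 : Fin (k+1)), true)

/-- `u ∈ c^η` : the discrete valuation `u` satisfies the constraint `c^η`, obtained by
rewriting `c` as `I(c)` over integral parts and fractional orderings and substituting the
truth values of the fractional orderings determined by the pattern `η`. -/
def CC.satP {k : ℕ} (η : PatSeq k) (u : DVal k) : CC k → Prop
  | .diff i j op d =>
      let I : ℤ := (u i.succ : ℤ) - (u j.succ : ℤ)
      (match op with
      | .lt => I < d ∨ (I = d ∧ fracGtP η j.succ i.succ)
      | .le => I < d ∨ (I = d ∧ (fracGtP η j.succ i.succ ∨ fracEqP η i.succ j.succ))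
      | .eq => I = d ∧ fracEqP η i.succ j.succ
      | .ge => I > d ∨ (I = d ∧ (fracGtP η i.succ j.succ ∨ fracEqP η i.succ j.succ))
      | .gt => I > d ∨ (I = d ∧ fracGtP η i.succ j.succ))
  | .single i op d =>
      let I : ℤ := (u i.succ : ℤ)
      (match op with
      | .lt => I < d
      | .le => I < d ∨ (I = d ∧ fracZeroP η i.succ)
      | .eq => I = d ∧ fracZeroP η i.succ
      | .ge => I ≥ d
      | .gt => I > d ∨ (I = d ∧ ¬ fracZeroP η i.succ))
  | .not c => ¬ c.satP η u
  | .and c₁ c₂ => c₁.satP η u ∧ c₂.satP η u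

/-! ## Pushdown timed automata -/

/-- A pushdown timed automaton `⟨S, {x₁,…,x_k}, Inv, R, Γ, PD⟩`:
`Inv` assigns an invariant to each state, `R s s' = (Rc s s', Rr s s')` assigns a reset
condition and a set of clock resets (a subset of `K⁺`) to each edge, and
`PD s s' = (PDa s s', PDw s s')` assigns a stack operation to each edge. -/
structure PTA (k : ℕ) (S : Type) (Γ : Type) where
  Inv : S → CC k
  Rc : S → S → CC k
  Rr : S → S → Finset (Fin (k+1))
  hRr : ∀ s s', (0 : Fin (k+1)) ∉ Rr s s'
  PDa : S → S → Γ
  PDw : S → S → List Γ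

/-- A configuration `(s, v, w)` of a PTA. -/
abbrev Config (k : ℕ) (S Γ : Type) := S × Val k × List Γ

/-- The one-step transition relation `→_A` of a PTA. -/
def Step {k : ℕ} {S Γ : Type} (A : PTA k S Γ) (c₁ c₂ : Config k S Γ) : Prop :=
  -- progress transition
  (c₁.1 = c₂.1 ∧ c₁.2.2 = c₂.2.2 ∧
    ∃ δ : ℝ, 0 < δ ∧ c₂.2.1 = shift c₁.2.1 δ ∧
      ∀ δ', 0 ≤ δ' → δ' ≤ δ → (A.Inv c₁.1).sat (shift c₁.2.1 δ')) ∨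
  -- reset transition
  ((A.Inv c₁.1).sat c₁.2.1 ∧ (A.Rc c₁.1 c₂.1).sat c₁.2.1 ∧
    c₂.2.1 = resetVal (A.Rr c₁.1 c₂.1) c₁.2.1 ∧ (A.Inv c₂.1).sat c₂.2.1 ∧
    ∃ w : List Γ, c₁.2.2 = A.PDa c₁.1 c₂.1 :: w ∧ c₂.2.2 = A.PDw c₁.1 c₂.1 ++ w)

/-- `→*_A`, the transitive closure of `→_A`. -/
def Reach {k : ℕ} {S Γ : Type} (A : PTA k S Γ) : Config k S Γ → Config k S Γ → Prop :=
  Relation.TransGen (Step A)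

/-- `(s₀,u₀,w₀) →*_{A,η} (s₁,u₁,w₁)`. -/
def ReachPat {k : ℕ} {S Γ : Type} (A : PTA k S Γ) (η : PatSeq k)
    (s₀ : S) (u₀ : DVal k) (w₀ : List Γ) (s₁ : S) (u₁ : DVal k) (w₁ : List Γ) : Prop :=
  ∃ v₀ v₁ : Val k, IsVal v₀ ∧ IsVal v₁ ∧ v₀ 0 = 0 ∧
    intPart v₀ = u₀ ∧ intPart v₁ = u₁ ∧ PatternOf v₀ v₁ η ∧
    Reach A (s₀, v₀, w₀) (s₁, v₁, w₁)

/-! ## The pattern graph -/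

/-- A configuration `(s, η, u, w)` of the pattern graph. -/
abbrev GConfig (k : ℕ) (S Γ : Type) := S × PatSeq k × DVal k × List Γ

/-- The one-step transition relation `→_G` of the pattern graph `G` of a PTA `A`,
through progress edges, stay edges and reset edges. -/
def GStep {k : ℕ} {S Γ : Type} (A : PTA k S Γ) (c₁ c₂ : GConfig k S Γ) : Prop :=
  -- progress edge
  (c₁.1 = c₂.1 ∧ c₁.2.2.2 = c₂.2.2.2 ∧
    nextPair c₁.2.1 c₁.2.2.1 = (c₂.2.1, c₂.2.2.1) ∧
    (A.Inv c₁.1).satP c₁.2.1 c₁.2.2.1 ∧ (A.Inv c₁.1).satP c₂.2.1 c₂.2.2.1) ∨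
  -- stay edge
  (c₁ = c₂ ∧ IsMergePat c₁.2.1 ∧ (A.Inv c₁.1).satP c₁.2.1 c₁.2.2.1) ∨
  -- reset edge
  (resetPair (A.Rr c₁.1 c₂.1) c₁.2.1 c₁.2.2.1 = (c₂.2.1, c₂.2.2.1) ∧
    ((A.Rc c₁.1 c₂.1).and (A.Inv c₁.1)).satP c₁.2.1 c₁.2.2.1 ∧
    (A.Inv c₂.1).satP c₂.2.1 c₂.2.2.1 ∧
    ∃ w : List Γ, c₁.2.2.2 = A.PDa c₁.1 c₂.1 :: w ∧ c₂.2.2.2 = A.PDw c₁.1 c₂.1 ++ w)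

/-- `→*_G`, the transitive closure of `→_G`. -/
def GReach {k : ℕ} {S Γ : Type} (A : PTA k S Γ) : GConfig k S Γ → GConfig k S Γ → Prop :=
  Relation.TransGen (GStep A)

end PTApaper
namespace PTApaper

lemma rel_nonneg {k : ℕ} (v : Val k) (i) : 0 ≤ relFract v i := by
  unfold relFract; split_ifs <;> exact Int.fract_nonneg _

lemma rel_lt_one {k : ℕ} (v : Val k) (i) : relFract v i < 1 := by
  unfold relFract; split_ifs <;> exact Int.fract_lt_one _

lemma rel_zero_mod {k : ℕ} (v : Val k) : ∃ z : ℤ, relFract v 0 = -v 0 + z := by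
  refine ⟨1 + ⌊v 0⌋ - ⌊1 - Int.fract (v 0)⌋, ?_⟩
  simp only [relFract, if_true]
  rw [Int.fract]
  have := Int.floor_add_fract (v 0)
  push_cast; linarith

lemma rel_mod {k : ℕ} (v : Val k) (i) (hi : i ≠ 0) :
    ∃ z : ℤ, relFract v i = v i + relFract v 0 + z := by
  refine ⟨-⌊v i⌋ - ⌊Int.fract (v i) + Int.fract (1 - Int.fract (v 0))⌋, ?_⟩
  simp only [relFract, if_true, if_neg hi]
  rw [Int.fract]
  have := Int.floor_add_fract (v i)
  push_cast; linarith

lemma rel_zero_unique {k : ℕ} (v : Val k) (x : ℝ) (h0 : 0 ≤ x) (h1 : x < 1)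
    (z : ℤ) (h : x = - v 0 + z) : relFract v 0 = x := by
  obtain ⟨w, hw⟩ := rel_zero_mod v
  have e1 : Int.fract (relFract v 0) = Int.fract x := by
    rw [hw, h]; simp
  rwa [Int.fract_eq_self.2 ⟨rel_nonneg v 0, rel_lt_one v 0⟩, Int.fract_eq_self.2 ⟨h0, h1⟩] at e1

lemma rel_unique {k : ℕ} (v : Val k) (i) (hi : i ≠ 0) (x : ℝ) (h0 : 0 ≤ x) (h1 : x < 1)
    (z : ℤ) (h : x = v i + relFract v 0 + z) : relFract v i = x := by
  obtain ⟨w, hw⟩ := rel_mod v i hi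
  have e1 : Int.fract (relFract v i) = Int.fract x := by
    rw [hw, h]; simp
  rwa [Int.fract_eq_self.2 ⟨rel_nonneg v i, rel_lt_one v i⟩, Int.fract_eq_self.2 ⟨h0, h1⟩] at e1

lemma fract_zero_eq {k : ℕ} (v : Val k) :
    Int.fract (v 0) = if relFract v 0 = 0 then 0 else 1 - relFract v 0 := by
  obtain ⟨w, hw⟩ := rel_zero_mod v
  have := rel_nonneg v 0
  have := rel_lt_one v 0
  rw [Int.fract_eq_iff]
  split_ifs with h
  · exact ⟨le_rfl, by norm_num, w, by linarith⟩
  · have : 0 < relFract v 0 := lt_of_le_of_ne ‹_› (Ne.symm h)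
    exact ⟨by linarith, by linarith, w - 1, by push_cast; linarith⟩

lemma fract_pos_eq {k : ℕ} (v : Val k) (i) (hi : i ≠ 0) :
    Int.fract (v i) = if relFract v 0 ≤ relFract v i then relFract v i - relFract v 0
      else relFract v i - relFract v 0 + 1 := by
  obtain ⟨w, hw⟩ := rel_mod v i hi
  have := rel_nonneg v 0
  have := rel_lt_one v 0
  have := rel_nonneg v i
  have := rel_lt_one v i
  rw [Int.fract_eq_iff]
  split_ifs with h
  · exact ⟨by linarith, by linarith, -w, by push_cast; linarith⟩
  · exact ⟨by linarith, by linarith, -w-1, by push_cast; linarith⟩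

lemma floor_of_intPart {k : ℕ} {v w : Val k} (hv : IsVal v) (hw : IsVal w)
    (h : intPart v = intPart w) (i) : ⌊v i⌋ = ⌊w i⌋ := by
  have := congrFun h i
  simp only [intPart] at this
  have := Int.floor_nonneg.2 (hv i)
  have := Int.floor_nonneg.2 (hw i)
  omega

lemma val_ext {k : ℕ} {v w : Val k} (hv : IsVal v) (hw : IsVal w)
    (h : intPart v = intPart w) (hr : ∀ i, relFract v i = relFract w i) : v = w := by
  funext i
  have h1 := floor_of_intPart hv hw h i
  have h2 : Int.fract (v i) = Int.fract (w i) := by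
    by_cases hi : i = 0
    · subst hi; rw [fract_zero_eq, fract_zero_eq, hr]
    · rw [fract_pos_eq _ _ hi, fract_pos_eq _ _ hi, hr, hr]
  rw [← Int.floor_add_fract (v i), ← Int.floor_add_fract (w i), h1, h2]

/-- Extension of a finite partial order isomorphism. -/
lemma extend_one {ι : Type*} [DecidableEq ι] (a c : ι → ℝ) (o : ι) (ha0 : a o = 0) (hc0 : c o = 0)
    (ha : ∀ x, 0 ≤ a x) (s t : Finset ι) (ho : o ∈ s) (hc : ∀ x ∈ s, 0 ≤ c x ∧ c x < 1)
    (hs : ∀ x ∈ s, ∀ y ∈ s, (a x < a y ↔ c x < c y)) :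
    ∃ c' : ι → ℝ, (∀ x ∈ s, c' x = c x) ∧ (∀ x ∈ s ∪ t, 0 ≤ c' x ∧ c' x < 1) ∧
      (∀ x ∈ s ∪ t, ∀ y ∈ s ∪ t, (a x < a y ↔ c' x < c' y)) := by
  induction t using Finset.induction_on with
  | empty => exact ⟨c, fun _ _ => rfl, by simpa using hc, by simpa using hs⟩
  | insert z t hz ih =>
    obtain ⟨c', h1, h2, h3⟩ := ih
    by_cases hzs : z ∈ s ∪ t
    · have : s ∪ insert z t = s ∪ t := by
        rw [Finset.union_insert, Finset.insert_eq_of_mem hzs]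
      rw [this]; exact ⟨c', h1, h2, h3⟩
    have hzs' : z ∉ s := fun h => hzs (Finset.mem_union_left _ h)
    have key : ∃ m : ℝ, 0 ≤ m ∧ m < 1 ∧
        ∀ y ∈ s ∪ t, (a z < a y ↔ m < c' y) ∧ (a y < a z ↔ c' y < m) := by
      by_cases hy : ∃ y ∈ s ∪ t, a y = a z
      · obtain ⟨y, hy, e⟩ := hy
        exact ⟨c' y, (h2 y hy).1, (h2 y hy).2, fun w hw => by
          rw [← e]; exact ⟨h3 y hy w hw, h3 w hw y hy⟩⟩
      · push Not at hy
        have hou : o ∈ s ∪ t := Finset.mem_union_left _ ho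
        obtain ⟨m, hm1, hm2⟩ := Order.exists_between_finsets
          (((s ∪ t).filter (fun y => a y < a z)).image c')
          (insert 1 (((s ∪ t).filter (fun y => a z < a y)).image c')) (by
            intro x hx y hy
            simp only [Finset.mem_image, Finset.mem_filter, Finset.mem_insert] at hx hy
            obtain ⟨x, ⟨hx, hx'⟩, rfl⟩ := hx
            rcases hy with rfl | ⟨y, ⟨hy, hy'⟩, rfl⟩
            · exact (h2 x hx).2
            · exact (h3 x hx y hy).1 (hx'.trans hy'))
        have lo : ∀ y ∈ s ∪ t, a y < a z → c' y < m := fun y hy h =>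
          hm1 _ (Finset.mem_image_of_mem _ (Finset.mem_filter.2 ⟨hy, h⟩))
        have hi : ∀ y ∈ s ∪ t, a z < a y → m < c' y := fun y hy h =>
          hm2 _ (Finset.mem_insert_of_mem (Finset.mem_image_of_mem _ (Finset.mem_filter.2 ⟨hy, h⟩)))
        refine ⟨m, ?_, hm2 _ (Finset.mem_insert_self _ _), fun y hyy => ?_⟩
        · have := lo o hou (lt_of_le_of_ne (ha0 ▸ ha z) (hy o hou))
          rw [h1 o ho, hc0] at this; exact this.le
        · rcases lt_or_gt_of_ne (hy y hyy) with h | h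
          · have := lo y hyy h
            exact ⟨⟨fun h' => by linarith, fun h' => by linarith⟩, fun _ => this, fun _ => h⟩
          · have := hi y hyy h
            exact ⟨⟨fun _ => this, fun _ => h⟩, fun h' => by linarith, fun h' => by linarith⟩
    obtain ⟨m, m0, m1, hm⟩ := key
    have hne : ∀ x ∈ s ∪ t, x ≠ z := fun x hx e => hzs (e ▸ hx)
    have hu : ∀ x, x ∈ s ∪ insert z t ↔ x = z ∨ x ∈ s ∪ t := by
      intro x; simp only [Finset.mem_union, Finset.mem_insert]; tauto
    refine ⟨Function.update c' z m, ?_, ?_, ?_⟩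
    · intro x hx
      rw [Function.update_of_ne (hne x (Finset.mem_union_left _ hx)), h1 x hx]
    · intro x hx
      rcases (hu x).1 hx with rfl | hx
      · simp [m0, m1]
      · rw [Function.update_of_ne (hne x hx)]; exact h2 x hx
    · intro x hx y hy
      replace hx := (hu x).1 hx
      replace hy := (hu y).1 hy
      rcases hx with rfl | hx <;> rcases hy with rfl | hy
      · simp
      · rw [Function.update_of_ne (hne y hy)]; simpa using (hm y hy).1
      · rw [Function.update_of_ne (hne x hx)]; simpa using (hm x hx).2
      · rw [Function.update_of_ne (hne y hy), Function.update_of_ne (hne x hx)]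
        exact h3 x hx y hy

/-- The values ordered by a pattern. -/
noncomputable def pv {k : ℕ} (v w : Val k) (x : Fin (k+1) × Bool) : ℝ :=
  relFract (bval v w x.2) x.1

lemma pattern_ord {k : ℕ} {va vb vc vd : Val k} {η : PatSeq k} (h1 : PatternOf va vb η)
    (h2 : PatternOf vc vd η) (x y) : pv va vb x < pv va vb y ↔ pv vc vd x < pv vc vd y := by
  obtain ⟨p, hp, hx⟩ := h1.1.2.2.2.2 x
  obtain ⟨q, hq, hy⟩ := h1.1.2.2.2.2 y
  obtain ⟨m, rfl⟩ := List.mem_iff_get.1 hp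
  obtain ⟨m', rfl⟩ := List.mem_iff_get.1 hq
  exact (h1.2 m m' x.2 y.2 x.1 y.1 hx hy).2.trans (h2.2 m m' x.2 y.2 x.1 y.1 hx hy).2.symm

lemma exists_pattern {k : ℕ} (v w : Val k) (hv : Initial v) : ∃ η, PatternOf v w η := by
  classical
  set a := pv v w with ha
  set L := (Finset.univ.image a).sort (· ≤ ·) with hL
  have hmem : ∀ y, y ∈ L ↔ ∃ x, a x = y := by intro y; simp [hL]
  have hlt : L.Pairwise (· < ·) := (Finset.sortedLT_sort _).pairwise
  have a0 : a (0, false) = 0 := by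
    have : v 0 = 0 := hv
    simp [ha, pv, bval, relFract, this]
  have hlen : L.length ≤ 2 * (k+1) := by
    rw [hL, Finset.length_sort]
    refine Finset.card_image_le.trans ?_
    simp; omega
  refine ⟨L.map (fun y => Finset.univ.filter (fun x => a x = y)), ⟨?_, ?_, ?_, ?_, ?_⟩, ?_⟩
  · simpa using hlen
  · intro p hp
    obtain ⟨y, hy, rfl⟩ := List.mem_map.1 hp
    obtain ⟨x, hx⟩ := (hmem y).1 hy
    exact ⟨x, by simp [hx]⟩
  · rw [List.pairwise_map]
    refine hlt.imp ?_
    intro x y hxy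
    rw [Finset.disjoint_left]
    intro z hz hz'
    simp only [Finset.mem_filter, Finset.mem_univ, true_and] at hz hz'
    linarith
  · have h0 : (0:ℝ) ∈ L := (hmem 0).2 ⟨_, a0⟩
    cases hLL : L with
    | nil => rw [hLL] at h0; simp at h0
    | cons y L' =>
      rw [hLL] at h0 hlt
      obtain ⟨x, hx⟩ := (hmem y).1 (by rw [hLL]; simp)
      have hy : 0 ≤ y := hx ▸ rel_nonneg _ _
      have : y = 0 := by
        rcases List.mem_cons.1 h0 with h | h
        · exact h.symm
        · have := (List.pairwise_cons.1 hlt).1 0 h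
          linarith
      simp [a0, this]
  · intro x
    exact ⟨_, List.mem_map_of_mem ((hmem (a x)).2 ⟨x, rfl⟩), by simp⟩
  · intro m m' b b' i i' hi hi'
    have e1 : a (i, b) = L[m.1]'(by simpa using m.2) := by simpa using hi
    have e2 : a (i', b') = L[m'.1]'(by simpa using m'.2) := by simpa using hi'
    change (a (i,b) = a (i', b') ↔ _) ∧ (a (i,b) < a (i', b') ↔ _)
    rw [e1, e2]
    have mono : ∀ p q (hp : p < L.length) (hq : q < L.length), p < q → L[p] < L[q] :=
      fun p q hp hq h => List.pairwise_iff_getElem.1 hlt p q hp hq h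
    have hm : m.1 < L.length := by simpa using m.2
    have hm' : m'.1 < L.length := by simpa using m'.2
    rw [Fin.ext_iff]
    rcases lt_trichotomy m.1 m'.1 with h | h | h
    · have := mono _ _ hm hm' h
      simp [h, this, h.ne, this.ne]
    · simp [h]
    · have := mono _ _ hm' hm h
      simp [h.ne', this.ne', not_lt.2 h.le, not_lt.2 this.le]

lemma pattern_transfer {k : ℕ} {va vb vc vd : Val k} {η : PatSeq k} (h1 : PatternOf va vb η)
    (h : ∀ x y, pv va vb x < pv va vb y ↔ pv vc vd x < pv vc vd y) : PatternOf vc vd η := by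
  refine ⟨h1.1, ?_⟩
  intro m m' b b' i i' hi hi'
  obtain ⟨e, l⟩ := h1.2 m m' b b' i i' hi hi'
  refine ⟨?_, (h (i,b) (i',b')).symm.trans l⟩
  rw [← e]
  have A := h (i,b) (i',b')
  have B := h (i',b') (i,b)
  simp only [pv] at A B
  rw [eq_iff_le_not_lt, eq_iff_le_not_lt, ← not_lt, ← not_lt, A, B]

lemma evalR_congr {x y d : ℝ} (h1 : x < d ↔ y < d) (h2 : d < x ↔ d < y) (op : CCmp) :
    op.evalR x d ↔ op.evalR y d := by
  cases op
  · exact h1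
  · simp only [CCmp.evalR]; rw [← not_lt, ← not_lt, h2]
  · simp only [CCmp.evalR]
    rw [eq_iff_le_not_lt, eq_iff_le_not_lt, ← not_lt, ← not_lt, h1, h2]
  · simp only [CCmp.evalR, ge_iff_le]; rw [← not_lt, ← not_lt, h1]
  · exact h2

lemma add_lt_int {I d : ℤ} {f : ℝ} (h1 : -1 < f) (h2 : f < 1) :
    (I : ℝ) + f < d ↔ I < d ∨ I = d ∧ f < 0 := by
  rcases lt_trichotomy I d with h | h | h
  · have : (I : ℝ) + 1 ≤ d := by exact_mod_cast h
    exact ⟨fun _ => Or.inl h, fun _ => by linarith⟩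
  · subst h; simp
  · have : (d : ℝ) + 1 ≤ I := by exact_mod_cast h
    refine ⟨fun _ => by linarith, ?_⟩
    rintro (h' | ⟨h', -⟩) <;> omega

lemma int_lt_add {I d : ℤ} {f : ℝ} (h1 : -1 < f) (h2 : f < 1) :
    (d : ℝ) < I + f ↔ d < I ∨ I = d ∧ 0 < f := by
  rcases lt_trichotomy I d with h | h | h
  · have : (I : ℝ) + 1 ≤ d := by exact_mod_cast h
    refine ⟨fun _ => by linarith, ?_⟩
    rintro (h' | ⟨h', -⟩) <;> omega
  · subst h; simp
  · have : (d : ℝ) + 1 ≤ I := by exact_mod_cast h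
    exact ⟨fun _ => Or.inl h, fun _ => by linarith⟩

lemma sat_congr {k : ℕ} {v w : Val k} (hf : ∀ i, ⌊v i⌋ = ⌊w i⌋)
    (hz : ∀ i, i ≠ 0 → (0 < Int.fract (v i) ↔ 0 < Int.fract (w i)))
    (ho : ∀ i j, i ≠ 0 → j ≠ 0 →
      (Int.fract (v i) < Int.fract (v j) ↔ Int.fract (w i) < Int.fract (w j)))
    (c : CC k) : c.sat v ↔ c.sat w := by
  induction c with
  | not c ih => simp only [CC.sat]; rw [ih]
  | and c d ih1 ih2 => simp only [CC.sat]; rw [ih1, ih2]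
  | single i op d =>
    have E : ∀ u : Val k, u i.succ = (⌊u i.succ⌋ : ℝ) + Int.fract (u i.succ) :=
      fun u => (Int.floor_add_fract _).symm
    have B : ∀ u : Val k, -1 < Int.fract (u i.succ) ∧ Int.fract (u i.succ) < 1 := fun u =>
      ⟨by linarith [Int.fract_nonneg (u i.succ)], Int.fract_lt_one _⟩
    have N : ∀ u : Val k, ¬ Int.fract (u i.succ) < 0 := fun u => not_lt.2 (Int.fract_nonneg _)
    have hd : (d : ℝ) = ((d : ℤ) : ℝ) := by simp
    apply evalR_congr
    · rw [E v, E w, hd, add_lt_int (B v).1 (B v).2, add_lt_int (B w).1 (B w).2, hf]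
      simp [N]
    · rw [E v, E w, hd, int_lt_add (B v).1 (B v).2, int_lt_add (B w).1 (B w).2, hf,
        hz _ (Fin.succ_ne_zero i)]
  | diff i j op d =>
    have E : ∀ u : Val k, u i.succ - u j.succ = ((⌊u i.succ⌋ - ⌊u j.succ⌋ : ℤ) : ℝ) +
        (Int.fract (u i.succ) - Int.fract (u j.succ)) := by
      intro u
      have := Int.floor_add_fract (u i.succ)
      have := Int.floor_add_fract (u j.succ)
      push_cast; linarith
    have B : ∀ u : Val k, -1 < Int.fract (u i.succ) - Int.fract (u j.succ) ∧
        Int.fract (u i.succ) - Int.fract (u j.succ) < 1 := by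
      intro u
      have := Int.fract_nonneg (u i.succ)
      have := Int.fract_nonneg (u j.succ)
      have := Int.fract_lt_one (u i.succ)
      have := Int.fract_lt_one (u j.succ)
      constructor <;> linarith
    have hd : (d : ℝ) = ((d : ℤ) : ℝ) := by simp
    apply evalR_congr
    · rw [E v, E w, hd, add_lt_int (B v).1 (B v).2, add_lt_int (B w).1 (B w).2, hf, hf,
        sub_neg, sub_neg, ho _ _ (Fin.succ_ne_zero i) (Fin.succ_ne_zero j)]
    · rw [E v, E w, hd, int_lt_add (B v).1 (B v).2, int_lt_add (B w).1 (B w).2, hf, hf,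
        sub_pos, sub_pos, ho _ _ (Fin.succ_ne_zero j) (Fin.succ_ne_zero i)]

lemma fract_ord {k : ℕ} (v : Val k) (i j) (hi : i ≠ 0) (hj : j ≠ 0) :
    Int.fract (v i) < Int.fract (v j) ↔
      (relFract v j < relFract v 0 ∧ ¬ relFract v i < relFract v 0) ∨
      ((relFract v j < relFract v 0 ↔ relFract v i < relFract v 0) ∧
        relFract v i < relFract v j) := by
  have := rel_nonneg v i
  have := rel_lt_one v i
  have := rel_nonneg v j
  have := rel_lt_one v j
  rw [fract_pos_eq v i hi, fract_pos_eq v j hj]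
  by_cases h1 : relFract v i < relFract v 0 <;> by_cases h2 : relFract v j < relFract v 0
  · simp [h1, h2, not_le.2 h1, not_le.2 h2]
  · simp [h1, h2, not_le.2 h1, not_lt.1 h2]; linarith
  · simp [h1, h2, not_lt.1 h1, not_le.2 h2]; linarith
  · simp [h1, h2, not_lt.1 h1, not_lt.1 h2]

lemma fract_pos_iff {k : ℕ} (v : Val k) (i) (hi : i ≠ 0) :
    0 < Int.fract (v i) ↔ relFract v i < relFract v 0 ∨ relFract v 0 < relFract v i := by
  have := rel_nonneg v i
  have := rel_lt_one v 0
  rw [fract_pos_eq v i hi]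
  split_ifs with h
  · rw [sub_pos]; simp [not_lt.2 h]
  · have := not_le.1 h
    simp [this]; linarith

theorem backwards_reset (k : ℕ) (hk : 1 ≤ k) (va vb vc vd : Val k)
    (hva : IsVal va) (hvb : IsVal vb) (hvc : IsVal vc) (hvd : IsVal vd)
    (h0a : Initial va) (h0c : Initial vc)
    (heq : PairEquiv va vb vc vd)
    (r : Finset (Fin (k+1))) (hr : (0 : Fin (k+1)) ∉ r)
    (v1 : Val k) (hv1 : IsVal v1) (hreset : resetVal r v1 = vb) :
    ∃ v2 : Val k, IsVal v2 ∧
      resetVal r v2 = vd ∧ PairEquiv va v1 vc v2 ∧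
      (Initial v1 ↔ Initial v2) ∧
      (v1 = va ↔ v2 = vc) ∧
      (∀ c : CC k, c.sat v1 ↔ c.sat v2) := by
  obtain ⟨⟨η, hη1, hη2⟩, hac, hbd⟩ := heq
  have hord := pattern_ord hη1 hη2
  have hb : ∀ i, i ∉ r → vb i = v1 i := fun i hi => by rw [← hreset]; simp [resetVal, hi]
  have hb0 : ∀ i, i ∈ r → vb i = 0 := fun i hi => by rw [← hreset]; simp [resetVal, hi]
  have hrel : ∀ i, i ∉ r → relFract vb i = relFract v1 i := fun i hi => by
    simp only [relFract, hb i hi, hb 0 hr]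
  have hfl := floor_of_intPart hvb hvd hbd
  -- reset clocks vanish in vd
  have hd0 : ∀ i, i ∈ r → vd i = 0 := by
    intro i hi
    have hi0 : i ≠ 0 := fun e => hr (e ▸ hi)
    have A := fract_pos_iff vb i hi0
    have B := fract_pos_iff vd i hi0
    have C := hord (i, true) (0, true)
    have D := hord (0, true) (i, true)
    simp only [pv, bval] at C D
    rw [← C, ← D, ← A, hb0 i hi] at B
    have E := hfl i
    rw [hb0 i hi] at E
    have F := Int.floor_add_fract (vd i)
    have G := Int.fract_nonneg (vd i)
    rw [← E] at F
    simp only [Int.fract_zero, lt_self_iff_false, iff_false, not_lt] at B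
    simp only [Int.floor_zero, Int.cast_zero] at F
    linarith
  -- choose the new relative positions
  have ha0 : pv va v1 (0, false) = 0 := by
    have : va 0 = 0 := h0a
    simp [pv, bval, relFract, this]
  have hc0 : pv vc vd (0, false) = 0 := by
    have : vc 0 = 0 := h0c
    simp [pv, bval, relFract, this]
  set s : Finset (Fin (k+1) × Bool) :=
    Finset.univ.filter (fun x => ¬ (x.2 = true ∧ x.1 ∈ r)) with hs
  have hpv : ∀ x ∈ s, pv va v1 x = pv va vb x := by
    rintro ⟨i, b⟩ hx
    cases b
    · rfl
    · have : i ∉ r := by simpa [hs] using hx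
      exact (hrel i this).symm
  obtain ⟨c', h1, h2, h3⟩ := extend_one (pv va v1) (pv vc vd) (0, false) ha0 hc0
    (fun x => rel_nonneg _ _) s Finset.univ (by simp [hs])
    (fun x _ => ⟨rel_nonneg _ _, rel_lt_one _ _⟩)
    (fun x hx y hy => by rw [hpv x hx, hpv y hy]; exact hord x y)
  simp only [Finset.mem_union, Finset.mem_univ, or_true, true_imp_iff] at h2 h3
  set v2 : Val k := fun i => if i ∈ r then ⌊v1 i⌋ + Int.fract (c' (i, true) - relFract vd 0)
    else vd i with hv2d
  have h20 : v2 0 = vd 0 := by simp [hv2d, hr]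
  have hv2n : ∀ i, i ∉ r → v2 i = vd i := fun i hi => by simp [hv2d, hi]
  have hv2r : ∀ i, i ∈ r → v2 i = ⌊v1 i⌋ + Int.fract (c' (i, true) - relFract vd 0) :=
    fun i hi => by simp [hv2d, hi]
  have hreln : ∀ i, i ∉ r → relFract v2 i = relFract vd i := fun i hi => by
    simp only [relFract, hv2n i hi, h20]
  have hpv2 : ∀ x, pv vc v2 x = c' x := by
    rintro ⟨i, b⟩
    cases b
    · rw [h1 _ (by simp [hs])]; rfl
    · by_cases hi : i ∈ r
      · have hi0 : i ≠ 0 := fun e => hr (e ▸ hi)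
        refine rel_unique v2 i hi0 _ (h2 _).1 (h2 _).2
          (⌊c' (i, true) - relFract vd 0⌋ - ⌊v1 i⌋) ?_
        rw [hreln 0 hr, hv2r i hi]
        have := Int.floor_add_fract (c' (i, true) - relFract vd 0)
        push_cast; linarith
      · rw [h1 _ (by simp [hs, hi])]; exact hreln i hi
  have hord2 : ∀ x y, pv va v1 x < pv va v1 y ↔ pv vc v2 x < pv vc v2 y := by
    intro x y; rw [hpv2, hpv2]; exact h3 x y
  have hfl2 : ∀ i, ⌊v1 i⌋ = ⌊v2 i⌋ := by
    intro i
    by_cases hi : i ∈ r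
    · rw [hv2r i hi]; simp
    · rw [hv2n i hi, ← hb i hi]; exact hfl i
  have hval2 : IsVal v2 := by
    intro i
    rw [← Int.floor_nonneg, ← hfl2, Int.floor_nonneg]; exact hv1 i
  have hint : intPart v1 = intPart v2 := by
    funext i; simp only [intPart, hfl2]
  have heqv : ∀ x y, pv va v1 x = pv va v1 y ↔ pv vc v2 x = pv vc v2 y := by
    intro x y
    rw [eq_iff_le_not_lt, eq_iff_le_not_lt, ← not_lt, ← not_lt, hord2, hord2]
  have hR : ∀ i j, relFract v1 i < relFract v1 j ↔ relFract v2 i < relFract v2 j :=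
    fun i j => hord2 (i, true) (j, true)
  refine ⟨v2, hval2, ?_, ?_, ?_, ?_, ?_⟩
  · funext i
    by_cases hi : i ∈ r
    · simp [resetVal, hi, hd0]
    · simp [resetVal, hi, hv2n]
  · obtain ⟨θ, hθ⟩ := exists_pattern va v1 h0a
    exact ⟨⟨θ, hθ, pattern_transfer hθ hord2⟩, hac, hint⟩
  · have key : ∀ u0 u : Val k, Initial u0 → 
        (Initial u ↔ ⌊u 0⌋ = 0 ∧ pv u0 u (0, true) = pv u0 u (0, false)) := by
      intro u0 u h0
      have e0 : pv u0 u (0, false) = 0 := by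
        have : u0 0 = 0 := h0
        simp [pv, bval, relFract, this]
      rw [e0]
      change u 0 = 0 ↔ ⌊u 0⌋ = 0 ∧ relFract u 0 = 0
      constructor
      · intro h; simp [relFract, h]
      · rintro ⟨h, h'⟩
        have := fract_zero_eq u
        rw [if_pos h'] at this
        rw [← Int.floor_add_fract (u 0), h, this]; simp
    rw [key va v1 h0a, key vc v2 h0c, hfl2, heqv]
  · have key : ∀ u0 u : Val k, IsVal u0 → IsVal u →
        (u = u0 ↔ intPart u = intPart u0 ∧ ∀ i, pv u0 u (i, true) = pv u0 u (i, false)) := by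
      intro u0 u h0 hu
      constructor
      · rintro rfl; exact ⟨rfl, fun _ => rfl⟩
      · rintro ⟨h, h'⟩; exact val_ext hu h0 h h'
    rw [key va v1 hva hv1, key vc v2 hvc hval2, hint, hac]
    simp only [heqv]
  · refine sat_congr hfl2 ?_ ?_
    · intro i hi
      rw [fract_pos_iff _ _ hi, fract_pos_iff _ _ hi, hR, hR]
    · intro i j hi hj
      rw [fract_ord _ _ _ hi hj, fract_ord _ _ _ hi hj]
      simp only [hR]

end PTApaper
end

section
/- Let A be a pushdown timed automaton. For any states s₀ and s₁ of A, any two initial clock valuations v₀¹ and v₀², any two clock valuations v₁ and v₂, and any two stack words w₀ and w₁: if (v₀¹,v₁) ≈ (v₀²,v₂), then (s₀,v₀¹,w₀) →*_A (s₁,v₁,w₁) iff (s₀,v₀²,w₀) →*_A (s₁,v₂,w₁). -/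
open scoped BigOperators

namespace PTApaper

theorem exists_interp {ι : Type*} [DecidableEq ι] (α β : ι → ℝ) (s : Finset ι) :
    (∀ i ∈ s, ∀ j ∈ s, (α i < α j ↔ β i < β j)) →
    ∃ h : ℝ → ℝ, StrictMono h ∧ Function.Surjective h ∧ ∀ i ∈ s, h (α i) = β i := by
  induction s using Finset.induction_on_max_value α with
  | empty => intro _; exact ⟨id, strictMono_id, Function.surjective_id, by simp⟩
  | insert a s ha hmax ih =>
    intro H
    obtain ⟨h, hm, hs, hv⟩ := ih (fun i hi j hj =>
      H i (Finset.mem_insert_of_mem hi) j (Finset.mem_insert_of_mem hj))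
    rcases s.eq_empty_or_nonempty with rfl | hne
    · refine ⟨fun x => x + (β a - α a), fun x y hxy => by simpa using hxy,
        fun y => ⟨y - (β a - α a), by ring⟩, ?_⟩
      simp
    obtain ⟨b, hb, hbmax⟩ := Finset.exists_max_image s α hne
    have hab : ¬ α a < α b := not_lt.mpr (hmax b hb)
    have haM := Finset.mem_insert_self a s
    have hbM : b ∈ insert a s := Finset.mem_insert_of_mem hb
    rcases eq_or_lt_of_le (hmax b hb) with heq | hlt
    · refine ⟨h, hm, hs, ?_⟩
      intro i hi
      rcases Finset.mem_insert.mp hi with rfl | hi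
      · rw [← heq, hv b hb]
        apply le_antisymm
        · exact not_lt.mp (fun hh => hab ((H _ haM _ hbM).mpr hh))
        · exact not_lt.mp (fun hh => (lt_irrefl _ (heq ▸ (H _ hbM _ haM).mpr hh)))
      · exact hv i hi
    · have hβ : β b < β a := (H _ hbM _ haM).mp hlt
      set c : ℝ := (β a - β b) / (α a - α b) with hc
      have hcpos : 0 < c := div_pos (by linarith) (by linarith)
      have hbv := hv b hb
      refine ⟨fun x => if x ≤ α b then h x else β b + c * (x - α b), ?_, ?_, ?_⟩
      · intro x y hxy
        dsimp only
        split_ifs with h1 h2 h2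
        · exact hm hxy
        · have : h x ≤ h (α b) := hm.monotone h1
          have : 0 < c * (y - α b) := mul_pos hcpos (by linarith)
          linarith
        · exact absurd (hxy.le.trans h2) h1
        · have : c * (x - α b) < c * (y - α b) := mul_lt_mul_of_pos_left (by linarith) hcpos
          linarith
      · intro y
        rcases le_or_gt y (β b) with hy | hy
        · obtain ⟨x, rfl⟩ := hs y
          rw [← hbv] at hy
          exact ⟨x, if_pos (hm.le_iff_le.mp hy)⟩
        · refine ⟨α b + (y - β b) / c, ?_⟩
          have : 0 < (y - β b) / c := div_pos (by linarith) hcpos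
          dsimp only
          rw [if_neg (by linarith)]
          field_simp
          ring
      · intro i hi
        dsimp only
        rcases Finset.mem_insert.mp hi with rfl | hi
        · rw [if_neg (by linarith), hc, div_mul_cancel₀ _ (by linarith)]
          ring
        · rw [if_pos (hbmax i hi), hv i hi]

theorem exists_circle (h : ℝ → ℝ) (hm : StrictMono h) (hs : Function.Surjective h)
    (h0 : h 0 = 0) (h1 : h 1 = 1) :
    ∃ f : ℝ → ℝ, StrictMono f ∧ Function.Surjective f ∧
      (∀ (n : ℤ) (x : ℝ), f (x + n) = f x + n) ∧
      (∀ x, f x = ⌊x⌋ + h (Int.fract x)) := by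
  have hb : ∀ x : ℝ, 0 ≤ h (Int.fract x) ∧ h (Int.fract x) < 1 := fun x =>
    ⟨h0 ▸ hm.monotone (Int.fract_nonneg x), by simpa [h1] using hm (Int.fract_lt_one x)⟩
  refine ⟨fun x => ⌊x⌋ + h (Int.fract x), ?_, ?_, ?_, fun _ => rfl⟩
  · intro x y hxy
    dsimp only
    rcases eq_or_lt_of_le (Int.floor_mono hxy.le) with he | hl
    · rw [he]
      have : Int.fract x < Int.fract y := by
        unfold Int.fract; rw [he]; linarith
      linarith [hm this]
    · have : ((⌊x⌋ : ℝ)) + 1 ≤ ⌊y⌋ := by exact_mod_cast hl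
      linarith [hb x, hb y]
  · intro y
    obtain ⟨x, hx⟩ := hs (Int.fract y)
    have hx0 : 0 ≤ x := by
      apply hm.le_iff_le.mp; rw [h0, hx]; exact Int.fract_nonneg y
    have hx1 : x < 1 := by
      apply hm.lt_iff_lt.mp; rw [h1, hx]; exact Int.fract_lt_one y
    refine ⟨x + ⌊y⌋, ?_⟩
    dsimp only
    rw [Int.floor_add_intCast, Int.fract_add_intCast, Int.fract_eq_self.mpr ⟨hx0, hx1⟩,
      Int.floor_eq_zero_iff.mpr ⟨hx0, hx1⟩, hx]
    push_cast
    linarith [Int.floor_add_fract y]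
  · intro n x
    dsimp only
    rw [Int.floor_add_intCast, Int.fract_add_intCast]
    push_cast
    ring

/-- Transport of a valuation along a circle homeomorphism lift. -/
def transp {k : ℕ} (f : ℝ → ℝ) (v : Val k) : Val k := fun i => f (v i - v 0) - f (- v 0)

theorem transp_sat {k : ℕ} (f : ℝ → ℝ) (hm : StrictMono f)
    (hp : ∀ (n : ℤ) (x : ℝ), f (x + n) = f x + n) (v : Val k) (c : CC k) :
    c.sat (transp f v) ↔ c.sat v := by
  have key : ∀ (op : CCmp) (a b : ℝ) (d : ℕ),
      op.evalR (f a - f b) (d : ℝ) ↔ op.evalR (a - b) (d : ℝ) := by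
    intro op a b d
    have e : f (b + d) = f b + d := by simpa using hp d b
    have h1 : f a < f (b + d) ↔ a < b + d := hm.lt_iff_lt
    have h2 : f (b + d) < f a ↔ b + d < a := hm.lt_iff_lt
    have h3 : f a = f (b + d) ↔ a = b + d := hm.injective.eq_iff
    rw [e] at h1 h2 h3
    cases op <;> simp only [CCmp.evalR]
    · rw [sub_lt_iff_lt_add', sub_lt_iff_lt_add']; exact h1
    · rw [sub_le_iff_le_add', sub_le_iff_le_add', ← not_lt, ← not_lt]; exact not_congr h2
    · rw [sub_eq_iff_eq_add', sub_eq_iff_eq_add']; exact h3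
    · rw [ge_iff_le, ge_iff_le, le_sub_iff_add_le', le_sub_iff_add_le', ← not_lt, ← not_lt]
      exact not_congr h1
    · rw [gt_iff_lt, gt_iff_lt, lt_sub_iff_add_lt', lt_sub_iff_add_lt']; exact h2
  induction c with
  | diff i j op d =>
    simp only [CC.sat]
    have := key op (v i.succ - v 0) (v j.succ - v 0) d
    simpa [transp] using this
  | single i op d =>
    simp only [CC.sat]
    have := key op (v i.succ - v 0) (- v 0) d
    simpa [transp] using this
  | not c ih => simp only [CC.sat, ih]
  | and c₁ c₂ ih₁ ih₂ => simp only [CC.sat, ih₁, ih₂]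

theorem transp_shift {k : ℕ} (f : ℝ → ℝ) (v : Val k) (δ : ℝ) :
    transp f (shift v δ) = shift (transp f v) (f (- v 0) - f (- v 0 - δ)) := by
  funext i
  simp only [transp, shift]
  rw [show v i + δ - (v 0 + δ) = v i - v 0 by ring, show -(v 0 + δ) = - v 0 - δ by ring]
  ring

theorem transp_reset {k : ℕ} (f : ℝ → ℝ) (v : Val k) (r : Finset (Fin (k+1)))
    (hr : (0 : Fin (k+1)) ∉ r) :
    transp f (resetVal r v) = resetVal r (transp f v) := by
  funext i
  by_cases hi : i ∈ r <;> simp [transp, resetVal, hi, hr]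

theorem transp_step {k : ℕ} {S Γ : Type} (A : PTA k S Γ) (f : ℝ → ℝ) (hm : StrictMono f)
    (hs : Function.Surjective f)
    (hp : ∀ (n : ℤ) (x : ℝ), f (x + n) = f x + n) (c₁ c₂ : Config k S Γ)
    (h : Step A c₁ c₂) :
    Step A (c₁.1, transp f c₁.2.1, c₁.2.2) (c₂.1, transp f c₂.2.1, c₂.2.2) := by
  rcases h with ⟨e1, e2, δ, hδ, hv, hinv⟩ | ⟨a1, a2, a3, a4, a5⟩
  · refine Or.inl ⟨e1, e2, f (- c₁.2.1 0) - f (- c₁.2.1 0 - δ), ?_, ?_, ?_⟩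
    · exact sub_pos.mpr (hm (by linarith))
    · dsimp only; rw [hv, transp_shift]
    · intro d' h0 h1
      obtain ⟨x, hx⟩ := hs (f (- c₁.2.1 0) - d')
      have hx1 : x ≤ - c₁.2.1 0 := hm.le_iff_le.mp (by linarith)
      have hx2 : - c₁.2.1 0 - δ ≤ x := hm.le_iff_le.mp (by linarith)
      have := hinv (- c₁.2.1 0 - x) (by linarith) (by linarith)
      rw [← transp_sat f hm hp, transp_shift,
        show - c₁.2.1 0 - (- c₁.2.1 0 - x) = x by ring, hx, sub_sub_cancel] at this
      exact this
  · refine Or.inr ⟨?_, ?_, ?_, ?_, a5⟩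
    · exact (transp_sat f hm hp _ _).mpr a1
    · exact (transp_sat f hm hp _ _).mpr a2
    · dsimp only; rw [a3, transp_reset _ _ _ (A.hRr _ _)]
    · exact (transp_sat f hm hp _ _).mpr a4

theorem relFract_zero {k : ℕ} (v : Val k) : relFract v 0 = Int.fract (- v 0) := by
  simp only [relFract, if_true]
  rw [Int.fract_eq_fract]
  exact ⟨1 + ⌊v 0⌋, by push_cast; unfold Int.fract; ring⟩

theorem relFract_eq {k : ℕ} (v : Val k) (i : Fin (k+1)) (hi : i ≠ 0) :
    relFract v i = Int.fract (v i - v 0) := by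
  have h0 := relFract_zero v
  simp only [relFract, if_true] at h0
  simp only [relFract, if_neg hi, h0]
  rw [Int.fract_eq_fract]
  exact ⟨-⌊v i⌋ - ⌊- v 0⌋, by push_cast; unfold Int.fract; ring⟩

theorem floor_eq {k : ℕ} {v w : Val k} (hv : IsVal v) (hw : IsVal w)
    (h : intPart v = intPart w) (i : Fin (k+1)) : ⌊v i⌋ = ⌊w i⌋ := by
  have h1 := congrFun h i
  simp only [intPart] at h1
  have := Int.floor_nonneg.mpr (hv i)
  have := Int.floor_nonneg.mpr (hw i)
  omega

/-- Floor of a difference, via the fractional parts. -/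
theorem floor_aux (x y : ℝ) :
    ⌊x - y⌋ = ⌊x⌋ - ⌊y⌋ - (if Int.fract x < Int.fract y then 1 else 0) := by
  have hx := Int.floor_add_fract x
  have hy := Int.floor_add_fract y
  have a1 := Int.fract_nonneg x
  have a2 := Int.fract_lt_one x
  have a3 := Int.fract_nonneg y
  have a4 := Int.fract_lt_one y
  rw [Int.floor_eq_iff]
  split_ifs with h <;> push_cast <;> constructor <;> linarith

theorem neg_floor_aux (x : ℝ) :
    ⌊- x⌋ = - ⌊x⌋ - (if 0 < Int.fract (-x) then 1 else 0) := by
  have h := floor_aux 0 (-x)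
  simp only [Int.floor_zero, Int.fract_zero, zero_sub, neg_neg] at h
  omega

theorem pattern_lt {k : ℕ} {va vb vc vd : Val k} {η : PatSeq k}
    (h1 : PatternOf va vb η) (h2 : PatternOf vc vd η) (x y : Fin (k+1) × Bool) :
    relFract (bval va vb x.2) x.1 < relFract (bval va vb y.2) y.1 ↔
    relFract (bval vc vd x.2) x.1 < relFract (bval vc vd y.2) y.1 := by
  obtain ⟨p, hp, hxp⟩ := h1.1.2.2.2.2 x
  obtain ⟨q, hq, hyq⟩ := h1.1.2.2.2.2 y
  obtain ⟨m, rfl⟩ := List.get_of_mem hp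
  obtain ⟨m', rfl⟩ := List.get_of_mem hq
  exact (h1.2 m m' x.2 y.2 x.1 y.1 hxp hyq).2.trans (h2.2 m m' x.2 y.2 x.1 y.1 hxp hyq).2.symm

theorem relFract_bounds {k : ℕ} (v : Val k) (i : Fin (k+1)) :
    0 ≤ relFract v i ∧ relFract v i < 1 := by
  by_cases hi : i = 0
  · subst hi; rw [relFract_zero]; exact ⟨Int.fract_nonneg _, Int.fract_lt_one _⟩
  · rw [relFract_eq v i hi]; exact ⟨Int.fract_nonneg _, Int.fract_lt_one _⟩

/-- Generic matching of `v` and `w` under transport. -/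
theorem transp_eq {k : ℕ} (f h : ℝ → ℝ) (hf : ∀ x, f x = ⌊x⌋ + h (Int.fract x)) (h0 : h 0 = 0)
    {v w : Val k} (hv : IsVal v) (hw : IsVal w) (hint : intPart v = intPart w)
    (hval : ∀ i, h (relFract v i) = relFract w i)
    (hz : 0 < relFract v 0 ↔ 0 < relFract w 0)
    (hlt : ∀ i, relFract v i < relFract v 0 ↔ relFract w i < relFract w 0) :
    transp f v = w := by
  have fl := floor_eq hv hw hint
  have hn : ⌊- v 0⌋ = ⌊- w 0⌋ := by
    rw [neg_floor_aux, neg_floor_aux, fl 0]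
    rw [relFract_zero, relFract_zero] at hz
    simp only [hz]
  have hf0 : f (- v 0) = - w 0 := by
    rw [hf, ← relFract_zero, hval, relFract_zero, hn, Int.floor_add_fract]
  funext i
  simp only [transp, hf0]
  by_cases hi : i = 0
  · subst hi
    rw [sub_self, hf]; simp [h0]
  · have e1 := floor_aux (v i - v 0) (- v 0)
    have e2 := floor_aux (w i - w 0) (- w 0)
    have hl := hlt i
    rw [relFract_zero, relFract_zero, relFract_eq v i hi, relFract_eq w i hi] at hl
    rw [show v i - v 0 - - v 0 = v i by ring] at e1
    rw [show w i - w 0 - - w 0 = w i by ring] at e2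
    simp only [hl] at e1
    have e3 : ⌊v i - v 0⌋ = ⌊w i - w 0⌋ := by
      have := fl i
      omega
    rw [hf, ← relFract_eq v i hi, hval, relFract_eq w i hi, e3, Int.floor_add_fract]
    ring

theorem strong_bisim_dir {k : ℕ} {S Γ : Type}
    (A : PTA k S Γ) (s₀ s₁ : S)
    (va vb vc vd : Val k)
    (hva : IsVal va) (hvb : IsVal vb) (hvc : IsVal vc) (hvd : IsVal vd)
    (h0a : Initial va) (h0c : Initial vc)
    (w₀ w₁ : List Γ)
    (heq : PairEquiv va vb vc vd)
    (hr : Reach A (s₀, va, w₀) (s₁, vb, w₁)) : Reach A (s₀, vc, w₀) (s₁, vd, w₁) := by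
  obtain ⟨⟨η, h1, h2⟩, hi1, hi2⟩ := heq
  have hlt := pattern_lt h1 h2
  have za : relFract va 0 = 0 := by
    rw [relFract_zero, show va 0 = 0 from h0a]; simp
  have zc : relFract vc 0 = 0 := by
    rw [relFract_zero, show vc 0 = 0 from h0c]; simp
  obtain ⟨h, hm, hs, hv⟩ := exists_interp
    (fun o : Option (Fin (k+1) × Bool) => o.elim 1 (fun x => relFract (bval va vb x.2) x.1))
    (fun o : Option (Fin (k+1) × Bool) => o.elim 1 (fun x => relFract (bval vc vd x.2) x.1))
    Finset.univ (by
      intro i _ j _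
      rcases i with _ | x <;> rcases j with _ | y <;> simp only [Option.elim]
      · have := (relFract_bounds (bval va vb y.2) y.1).2
        have := (relFract_bounds (bval vc vd y.2) y.1).2
        constructor <;> intro <;> linarith
      · have := (relFract_bounds (bval va vb x.2) x.1).2
        have := (relFract_bounds (bval vc vd x.2) x.1).2
        constructor <;> intro <;> linarith
      · exact hlt x y)
  have hone : h 1 = 1 := hv none (Finset.mem_univ _)
  have hA : ∀ i, h (relFract va i) = relFract vc i := fun i =>
    hv (some (i, false)) (Finset.mem_univ _)
  have hB : ∀ i, h (relFract vb i) = relFract vd i := fun i =>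
    hv (some (i, true)) (Finset.mem_univ _)
  have hzero : h 0 = 0 := by have := hA 0; rwa [za, zc] at this
  obtain ⟨f, fm, fs, fp, ff⟩ := exists_circle h hm hs hzero hone
  have ta : transp f va = vc := transp_eq f h ff hzero hva hvc hi1 hA (by rw [za, zc])
    (fun i => hlt (i, false) (0, false))
  have tb : transp f vb = vd := transp_eq f h ff hzero hvb hvd hi2 hB
    (by have := hlt (0, false) (0, true); simpa only [bval, za, zc] using this)
    (fun i => hlt (i, true) (0, true))
  have := Relation.TransGen.lift (p := Step A)
    (fun c : Config k S Γ => ((c.1, transp f c.2.1, c.2.2) : Config k S Γ))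
    (fun a b hab => transp_step A f fm fs fp a b hab) _ _ hr
  rw [← ta, ← tb]
  exact this

/-- Lemma `strongbisim`. Let `A` be a PTA. For any states `s₀, s₁`,
any two initial clock valuations `va, vc`, any two clock valuations `vb, vd`, and any two
stack words `w₀, w₁`: if `(va,vb) ≈ (vc,vd)`, then
`(s₀,va,w₀) →*_A (s₁,vb,w₁)` iff `(s₀,vc,w₀) →*_A (s₁,vd,w₁)`. -/
theorem strong_bisim (k : ℕ) (hk : 1 ≤ k) {S Γ : Type} [Fintype S] [Fintype Γ]
    (A : PTA k S Γ) (s₀ s₁ : S)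
    (va vb vc vd : Val k)
    (hva : IsVal va) (hvb : IsVal vb) (hvc : IsVal vc) (hvd : IsVal vd)
    (h0a : Initial va) (h0c : Initial vc)
    (w₀ w₁ : List Γ)
    (heq : PairEquiv va vb vc vd) :
    Reach A (s₀, va, w₀) (s₁, vb, w₁) ↔ Reach A (s₀, vc, w₀) (s₁, vd, w₁) := by
  constructor
  · exact strong_bisim_dir A s₀ s₁ va vb vc vd hva hvb hvc hvd h0a h0c w₀ w₁ heq
  · refine strong_bisim_dir A s₀ s₁ vc vd va vb hvc hvd hva hvb h0c h0a w₀ w₁ ?_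
    obtain ⟨⟨η, h1, h2⟩, hi1, hi2⟩ := heq
    exact ⟨⟨η, h2, h1⟩, hi1.symm, hi2.symm⟩

end PTApaper
end
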